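/- For all a, b, c, d ∈ ℕ and m, n ∈ ℤ, the commutator [𝔏(a,b;m), 𝔏(c,d;n)] lies in the ℂ-linear span of {𝔏(p,q;m+n) : p, q ∈ ℕ, p+q ≤ a+b+c+d+1} ∪ {id_S}; moreover, if m+n ≠ 0 then it lies in the ℂ-linear span of {𝔏(p,q;m+n) : p, q ∈ ℕ, p+q ≤ a+b+c+d+1} alone (no identity component). -/

import Mathlib

/-!
The commutator is computed through its adjoint action on the Heisenberg operators rather than by
expanding a double sum. Since `[h(i), h(j)] = i δ_{i+j,0}`, the operator `𝔏(a,b;m)` satisfies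
`[𝔏(a,b;m), h(k)] = g(k) h(m+k)` with `g(k) = -(k/2) ((m+k)^a (-k)^b + (-k)^a (m+k)^b)`
(`LL_comm_hOp`). By the Jacobi identity `[[𝔏(a,b;m), 𝔏(c,d;n)], h(k)]` is an explicit multiple of
`h(m+n+k)`, and `exists_symbol` exhibits a polynomial `f` of degree at most `a+b+c+d+1` such that
`M = ∑ fᵢ 𝔏(i,0;m+n)` has the same brackets with all `h(k)`.

An operator commuting with every `h(k)` is a scalar (`eq_smul_one_of_commute`): it is determined
by its value on `1`, and this value is annihilated by all partial derivatives. So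
`[𝔏(a,b;m), 𝔏(c,d;n)] - M` is a scalar, namely the constant term of its value on `1`.

For `m + n ≠ 0` the scalar vanishes by weight. The constant term of `M 1` is zero. The operator
`E = 𝔏(0,0;0)` kills `1`, takes values without constant term, and satisfies
`[E, 𝔏(a,b;m)] = -m 𝔏(a,b;m)` (again by `eq_smul_one_of_commute`). Hence
`[E, [𝔏(a,b;m), 𝔏(c,d;n)]] = -(m+n) [𝔏(a,b;m), 𝔏(c,d;n)]`, and evaluating constant terms at `1`
shows that `[𝔏(a,b;m), 𝔏(c,d;n)] 1` has no constant term.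
-/

noncomputable section

/-- The polynomial algebra `S = ℂ[a₁,a₂,a₃,…]`, with variables indexed by `ℕ+`. -/
abbrev SS : Type := MvPolynomial ℕ+ ℂ

/-- The Heisenberg operators `h(n)` on `S`: for `n < 0`, multiplication by `a₋ₙ`;
for `n > 0`, `n·∂/∂aₙ`; and `h(0) = 0`. -/
noncomputable def hOp (n : ℤ) : Module.End ℂ SS :=
  if _h1 : 0 < n then
    (n : ℂ) • (MvPolynomial.pderiv (R := ℂ) (⟨n.toNat, by omega⟩ : ℕ+)).toLinearMap
  else if _h2 : n < 0 then
    LinearMap.mulLeft ℂ (MvPolynomial.X (⟨(-n).toNat, by omega⟩ : ℕ+))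
  else 0

/-- The normally ordered product `:h(i)h(j):`  (equal to `h(i)∘h(j)` if `i ≤ j`,
and to `h(j)∘h(i)` if `i > j`; note `f * g` is composition in `Module.End`). -/
noncomputable def nord (i j : ℤ) : Module.End ℂ SS :=
  if i ≤ j then hOp i * hOp j else hOp j * hOp i

/-! ### Heisenberg operators -/

lemma hOp_pos (q : ℕ+) (p : SS) :
    hOp ((q : ℕ) : ℤ) p = ((q : ℕ) : ℂ) • MvPolynomial.pderiv q p := by
  have h : (0 : ℤ) < ((q : ℕ) : ℤ) := by exact_mod_cast q.pos
  have e : (⟨((q : ℕ) : ℤ).toNat, by omega⟩ : ℕ+) = q := PNat.eq (by simp)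
  have h1 : hOp ((q : ℕ) : ℤ) = (((q : ℕ) : ℤ) : ℂ) •
      (MvPolynomial.pderiv (R := ℂ) (⟨((q : ℕ) : ℤ).toNat, by omega⟩ : ℕ+)).toLinearMap :=
    dif_pos h
  rw [h1, e, Int.cast_natCast]
  rfl

lemma hOp_neg (q : ℕ+) (p : SS) :
    hOp (-((q : ℕ) : ℤ)) p = MvPolynomial.X q * p := by
  have h : (0 : ℤ) < ((q : ℕ) : ℤ) := by exact_mod_cast q.pos
  have e : (⟨(-(-((q : ℕ) : ℤ))).toNat, by omega⟩ : ℕ+) = q := PNat.eq (by simp)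
  have h1 : hOp (-((q : ℕ) : ℤ)) = LinearMap.mulLeft ℂ
      (MvPolynomial.X (⟨(-(-((q : ℕ) : ℤ))).toNat, by omega⟩ : ℕ+) : SS) :=
    (dif_neg (by omega)).trans (dif_pos (by omega))
  rw [h1, e]
  rfl

lemma hOp_zero : hOp 0 = 0 := by simp [hOp]

lemma int_trichotomy (n : ℤ) :
    (∃ q : ℕ+, n = ((q : ℕ) : ℤ)) ∨ (∃ q : ℕ+, n = -((q : ℕ) : ℤ)) ∨ n = 0 := by
  rcases lt_trichotomy n 0 with h | h | h
  · exact Or.inr (Or.inl ⟨⟨(-n).toNat, by omega⟩, by simp; omega⟩)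
  · exact Or.inr (Or.inr h)
  · exact Or.inl ⟨⟨n.toNat, by omega⟩, by simp; omega⟩

lemma pderiv_comm (q r : ℕ+) (p : SS) :
    MvPolynomial.pderiv q (MvPolynomial.pderiv r p)
      = MvPolynomial.pderiv r (MvPolynomial.pderiv q p) := by
  have h : ⁅MvPolynomial.pderiv (R := ℂ) q, MvPolynomial.pderiv (R := ℂ) r⁆ = 0 := by
    apply MvPolynomial.derivation_ext
    intro k
    classical
    rw [Derivation.commutator_apply, MvPolynomial.pderiv_X, MvPolynomial.pderiv_X,
      Pi.single_apply, Pi.single_apply, Derivation.zero_apply]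
    split_ifs <;> simp
  have h1 := Derivation.congr_fun h p
  rwa [Derivation.commutator_apply, Derivation.zero_apply, sub_eq_zero] at h1

/-- The Heisenberg relation `[h(i), h(j)] = i δ_{i+j,0}`. -/
lemma hOp_comm (i j : ℤ) (p : SS) :
    hOp i (hOp j p) = hOp j (hOp i p) + (if i + j = 0 then (i : ℂ) else 0) • p := by
  have key : ∀ (q r : ℕ+), hOp ((q : ℕ) : ℤ) (hOp (-((r : ℕ) : ℤ)) p)
      = hOp (-((r : ℕ) : ℤ)) (hOp ((q : ℕ) : ℤ) p) + (if q = r then ((q : ℕ) : ℂ) else 0) • p := by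
    intro q r
    rw [hOp_pos, hOp_neg, hOp_neg, hOp_pos, MvPolynomial.pderiv_mul]
    by_cases h : q = r
    · subst h
      simp only [MvPolynomial.pderiv_X_self, if_true, one_mul, smul_add, mul_smul_comm]
      abel
    · rw [MvPolynomial.pderiv_X_of_ne (Ne.symm h)]
      simp [h]
  rcases int_trichotomy i with ⟨q, rfl⟩ | ⟨q, rfl⟩ | rfl <;>
  rcases int_trichotomy j with ⟨r, rfl⟩ | ⟨r, rfl⟩ | rfl
  · have h1 := q.pos
    have h2 := r.pos
    rw [if_neg (by omega), hOp_pos, hOp_pos, hOp_pos, hOp_pos, Derivation.map_smul,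
      Derivation.map_smul, zero_smul, add_zero, smul_comm, pderiv_comm]
  · rw [key]
    congr 2
    by_cases h : q = r
    · simp [h]
    · rw [if_neg h, if_neg]
      intro h'
      apply h
      apply PNat.coe_injective
      omega
  · simp [hOp_zero]
  · rw [key]
    by_cases h : q = r
    · simp [h]
    · rw [if_neg (Ne.symm h), if_neg]
      · simp
      intro h'
      apply h
      apply PNat.coe_injective
      omega
  · have h1 := q.pos
    have h2 := r.pos
    rw [if_neg (by omega), hOp_neg, hOp_neg, hOp_neg, hOp_neg, zero_smul, add_zero]
    ring
  · simp [hOp_zero]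
  · simp [hOp_zero]
  · simp [hOp_zero]
  · simp [hOp_zero]

lemma hOp_one_of_nonneg {i : ℤ} (hi : 0 ≤ i) : hOp i 1 = 0 := by
  rcases int_trichotomy i with ⟨q, rfl⟩ | ⟨q, rfl⟩ | rfl
  · simp [hOp_pos]
  · have := q.pos
    omega
  · simp [hOp_zero]

lemma constantCoeff_hOp_of_nonpos {i : ℤ} (hi : i ≤ 0) (p : SS) :
    MvPolynomial.constantCoeff (hOp i p) = 0 := by
  rcases int_trichotomy i with ⟨q, rfl⟩ | ⟨q, rfl⟩ | rfl
  · have := q.pos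
    omega
  · simp [hOp_neg]
  · simp [hOp_zero]

lemma exists_bound_hOp (p : SS) : ∃ N : ℤ, ∀ k : ℤ, N < k → hOp k p = 0 := by
  refine ⟨(∑ q ∈ p.vars, (q : ℕ) : ℕ), fun k hk => ?_⟩
  rcases int_trichotomy k with ⟨q, rfl⟩ | ⟨q, rfl⟩ | rfl
  · have hq : q ∉ p.vars := by
      intro h
      have := Finset.single_le_sum (f := fun q : ℕ+ => (q : ℕ)) (fun _ _ => Nat.zero_le _) h
      omega
    simp [hOp_pos, MvPolynomial.pderiv_eq_zero_of_notMem_vars hq]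
  · omega
  · simp [hOp_zero]

/-- A polynomial killed by every `h(k)` with `k > 0` is constant. -/
lemma eq_C_of_hOp_eq_zero {p : SS} (h : ∀ q : ℕ+, hOp ((q : ℕ) : ℤ) p = 0) :
    p = MvPolynomial.C (MvPolynomial.constantCoeff p) := by
  classical
  ext s
  rw [MvPolynomial.coeff_C]
  split_ifs with hs
  · subst hs
    rfl
  · obtain ⟨q, hq⟩ : ∃ q, s q ≠ 0 := by
      by_contra! h'
      exact hs (Finsupp.ext fun q => by simp [h' q])
    have h1 := h q
    rw [hOp_pos, smul_eq_zero] at h1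
    have h2 : MvPolynomial.pderiv q p = 0 :=
      h1.resolve_left (by exact_mod_cast q.pos.ne')
    have h3 := MvPolynomial.coeff_pderiv (i := q) p (s - Finsupp.single q 1)
    rw [h2, MvPolynomial.coeff_zero, tsub_add_cancel_of_le
      (by simpa using Nat.one_le_iff_ne_zero.mpr hq)] at h3
    exact (mul_eq_zero.mp h3.symm).resolve_right (Nat.cast_add_one_ne_zero _)

/-- Schur's lemma for the Fock space: an operator commuting with every `h(k)` is a scalar, which
can be read off as the constant term of its value on `1`. -/
lemma eq_smul_one_of_commute (D : Module.End ℂ SS)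
    (hD : ∀ (k : ℤ) (p : SS), D (hOp k p) = hOp k (D p)) :
    D = MvPolynomial.constantCoeff (D 1) • (1 : Module.End ℂ SS) := by
  have h1 : D 1 = MvPolynomial.C (MvPolynomial.constantCoeff (D 1)) := by
    apply eq_C_of_hOp_eq_zero
    intro q
    rw [← hD, hOp_one_of_nonneg (by omega), map_zero]
  have h2 : ∀ p : SS, D p = p * D 1 := by
    intro p
    induction p using MvPolynomial.induction_on with
    | C z =>
      have : (MvPolynomial.C z : SS) = z • 1 := by
        rw [MvPolynomial.smul_eq_C_mul, mul_one]
      rw [this, map_smul, smul_mul_assoc, one_mul]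
    | add p q hp hq => rw [map_add, hp, hq, add_mul]
    | mul_X p q hp =>
      have := hD (-((q : ℕ) : ℤ)) p
      rw [hOp_neg, hOp_neg, hp] at this
      rw [mul_comm p, this, mul_assoc]
  refine LinearMap.ext fun p => ?_
  rw [h2 p, LinearMap.smul_apply, Module.End.one_apply, MvPolynomial.smul_eq_C_mul, ← h1, mul_comm]

/-! ### Normally ordered products -/

lemma nord_apply (i j : ℤ) (p : SS) : nord i j p = hOp (min i j) (hOp (max i j) p) := by
  unfold nord
  split_ifs with h
  · rw [min_eq_left h, max_eq_right h]
    rfl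
  · rw [min_eq_right (by omega), max_eq_left (by omega)]
    rfl

lemma nord_comm_hOp (i j k : ℤ) (p : SS) :
    nord i j (hOp k p) = hOp k (nord i j p)
      + ((if j + k = 0 then (j : ℂ) else 0) • hOp i p
        + (if i + k = 0 then (i : ℂ) else 0) • hOp j p) := by
  unfold nord
  split_ifs with h <;>
  · simp only [Module.End.mul_apply]
    rw [hOp_comm _ k p, map_add, hOp_comm _ k, map_smul]
    simp [*]
    try abel

lemma constantCoeff_nord_one (i j : ℤ) : MvPolynomial.constantCoeff (nord i j 1) = 0 := by
  rw [nord_apply]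
  rcases le_total 0 (max i j) with h | h
  · rw [hOp_one_of_nonneg h, map_zero, map_zero]
  · exact constantCoeff_hOp_of_nonpos (min_le_max.trans h) _

lemma nord_support_finite (n : ℤ) (p : SS) : {j : ℤ | nord j (n - j) p ≠ 0}.Finite := by
  obtain ⟨N, hN⟩ := exists_bound_hOp p
  refine (Set.finite_Icc (n - N) N).subset fun j hj => ?_
  by_contra hj'
  apply hj
  rw [nord_apply, hN, map_zero]
  simp only [Set.mem_Icc, not_and_or, not_le] at hj'
  rw [lt_max_iff]
  omega

lemma LL_support_finite (f : ℤ → ℂ) (n : ℤ) (p : SS) :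
    (Function.support fun j : ℤ => f j • nord j (n - j) p).Finite := by
  refine (nord_support_finite n p).subset fun j hj => ?_
  intro h
  apply hj
  simp [h]

/-! ### Brackets of the quadratic operators with the Heisenberg operators -/

/-- `LL a b n` is the operator `𝔏(a,b;n)` for all `a`, `b`, `n`. -/
def IsQuadraticFamily (LL : ℕ → ℕ → ℤ → Module.End ℂ SS) : Prop :=
  ∀ (a b : ℕ) (n : ℤ) (p : SS), LL a b n p
      = (1 / 2 : ℂ) •
          ∑ᶠ j : ℤ, ((j : ℂ) ^ a * ((n : ℂ) - (j : ℂ)) ^ b) • nord j (n - j) p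

/-- The scalar `g(k)` in `[𝔏(a,b;m), h(k)] = g(k) h(m+k)`. -/
def bracketCoeff (a b : ℕ) (m k : ℂ) : ℂ :=
  -(k / 2) * ((m + k) ^ a * (-k) ^ b + (-k) ^ a * (m + k) ^ b)

variable {LL : ℕ → ℕ → ℤ → Module.End ℂ SS}

lemma LL_comm_hOp (hLL : IsQuadraticFamily LL) (a b : ℕ) (m k : ℤ) (p : SS) :
    LL a b m (hOp k p) = hOp k (LL a b m p) + bracketCoeff a b m k • hOp (m + k) p := by
  classical
  set f : ℤ → ℂ := fun j => (j : ℂ) ^ a * ((m : ℂ) - (j : ℂ)) ^ b with hf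
  let T : Finset ℤ := (LL_support_finite f m p).toFinset ∪
    (LL_support_finite f m (hOp k p)).toFinset ∪ {m + k, -k}
  have hs : ∀ q : SS, (q = p ∨ q = hOp k p) →
      LL a b m q = (1 / 2 : ℂ) • ∑ j ∈ T, f j • nord j (m - j) q := by
    intro q hq
    rw [hLL, finsum_eq_sum_of_support_subset]
    intro j hj
    rcases hq with rfl | rfl
    · simp only [T, Finset.coe_union, Set.Finite.coe_toFinset]
      exact Or.inl (Or.inl hj)
    · simp only [T, Finset.coe_union, Set.Finite.coe_toFinset]
      exact Or.inl (Or.inr hj)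
  rw [hs _ (Or.inr rfl), hs _ (Or.inl rfl), map_smul, map_sum]
  simp only [nord_comm_hOp, map_smul, smul_add, Finset.sum_add_distrib, smul_smul]
  have h1 : ∑ j ∈ T, (f j * if m - j + k = 0 then ((m - j : ℤ) : ℂ) else 0) • hOp j p
      = (f (m + k) * (-k : ℂ)) • hOp (m + k) p := by
    rw [Finset.sum_eq_single_of_mem (m + k) (by simp [T])]
    · rw [if_pos (by ring)]
      push_cast
      ring_nf
    · intro j _ hj
      rw [if_neg (by omega), mul_zero, zero_smul]
  have h2 : ∑ j ∈ T, (f j * if j + k = 0 then (j : ℂ) else 0) • hOp (m - j) p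
      = (f (-k) * (-k : ℂ)) • hOp (m + k) p := by
    rw [Finset.sum_eq_single_of_mem (-k) (by simp [T])]
    · rw [if_pos (by ring), sub_neg_eq_add, Int.cast_neg]
    · intro j _ hj
      rw [if_neg (by omega), mul_zero, zero_smul]
  rw [h1, h2, smul_smul, smul_smul, ← add_smul]
  congr 2
  simp only [hf, bracketCoeff]
  push_cast
  ring

lemma constantCoeff_LL_one (hLL : IsQuadraticFamily LL) (a b : ℕ) (m : ℤ) :
    MvPolynomial.constantCoeff (LL a b m 1) = 0 := by
  rw [hLL, finsum_eq_sum _ (LL_support_finite _ m 1), MvPolynomial.constantCoeff_smul, map_sum,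
    Finset.sum_eq_zero, smul_zero]
  intro j _
  rw [MvPolynomial.constantCoeff_smul, constantCoeff_nord_one, smul_zero]

lemma constantCoeff_euler (hLL : IsQuadraticFamily LL) (p : SS) :
    MvPolynomial.constantCoeff (LL 0 0 0 p) = 0 := by
  rw [hLL, finsum_eq_sum _ (LL_support_finite _ 0 p), MvPolynomial.constantCoeff_smul, map_sum,
    Finset.sum_eq_zero, smul_zero]
  intro j _
  rw [MvPolynomial.constantCoeff_smul, nord_apply,
    constantCoeff_hOp_of_nonpos (by rw [min_le_iff]; omega), smul_zero]

lemma euler_one (hLL : IsQuadraticFamily LL) : LL 0 0 0 1 = 0 := by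
  rw [hLL, finsum_eq_zero_of_forall_eq_zero, smul_zero]
  intro j
  rw [nord_apply, hOp_one_of_nonneg (by rw [le_max_iff]; omega), map_zero, smul_zero]

/-- `[E, 𝔏(a,b;m)] = -m 𝔏(a,b;m)` for `E = 𝔏(0,0;0)`: the operator `𝔏(a,b;m)` has weight `-m`. -/
lemma euler_comm (hLL : IsQuadraticFamily LL) (a b : ℕ) (m : ℤ) (p : SS) :
    LL 0 0 0 (LL a b m p) = LL a b m (LL 0 0 0 p) - (m : ℂ) • LL a b m p := by
  have h := eq_smul_one_of_commute
    (LL 0 0 0 * LL a b m - LL a b m * LL 0 0 0 + (m : ℂ) • LL a b m) (by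
      intro k p
      simp only [LinearMap.add_apply, LinearMap.sub_apply, LinearMap.smul_apply,
        Module.End.mul_apply, LL_comm_hOp hLL, map_add, map_sub, map_smul, zero_add]
      simp only [bracketCoeff, Int.cast_zero, Int.cast_add, zero_add, pow_zero]
      module)
  have h0 : MvPolynomial.constantCoeff
      ((LL 0 0 0 * LL a b m - LL a b m * LL 0 0 0 + (m : ℂ) • LL a b m) 1) = 0 := by
    simp only [LinearMap.add_apply, LinearMap.sub_apply, LinearMap.smul_apply,
      Module.End.mul_apply, euler_one hLL, map_zero, map_add, map_sub, constantCoeff_euler hLL,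
      MvPolynomial.constantCoeff_smul, constantCoeff_LL_one hLL]
    simp
  rw [h0, zero_smul] at h
  have := LinearMap.congr_fun h p
  simp only [LinearMap.add_apply, LinearMap.sub_apply, LinearMap.smul_apply,
      Module.End.mul_apply, LinearMap.zero_apply] at this
  rw [← sub_eq_zero, ← this]
  abel

/-! ### The symbol of the commutator -/

open Polynomial in
/-- A polynomial `f` whose quadratic operator `(1/2) ∑ⱼ f(j) :h(j)h(m+n-j):` has the same brackets
with the `h(k)` as `[𝔏(a,b;m), 𝔏(c,d;n)]`. It is found by applying `[𝔏(a,b;m), ·]` termwise to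
`𝔏(c,d;n)` as a derivation, ignoring the order of the factors. -/
lemma exists_symbol (a b c d : ℕ) (m n : ℂ) :
    ∃ f : ℂ[X], f.natDegree ≤ a + b + c + d + 1 ∧ ∀ k : ℂ,
      -(k / 2) * (f.eval (m + n + k) + f.eval (-k))
        = bracketCoeff c d n k * bracketCoeff a b m (n + k)
          - bracketCoeff a b m k * bracketCoeff c d n (m + k) := by
  -- `w₁` and `w₂` are `bracketCoeff a b m` at `X - m` and at `n - X`.
  let w₁ : ℂ[X] := C (1 / 2) * (C m - X) *
    (X ^ a * (C m - X) ^ b + (C m - X) ^ a * X ^ b)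
  let w₂ : ℂ[X] := C (1 / 2) * (X - C n) *
    ((C (m + n) - X) ^ a * (X - C n) ^ b + (X - C n) ^ a * (C (m + n) - X) ^ b)
  refine ⟨(X - C m) ^ c * (C (m + n) - X) ^ d * w₁ + X ^ c * (C n - X) ^ d * w₂, ?_, ?_⟩
  · have e1 : ∀ z : ℂ, (X - C z : ℂ[X]).natDegree ≤ 1 := fun z => by compute_degree
    have e2 : ∀ z : ℂ, (C z - X : ℂ[X]).natDegree ≤ 1 := fun z => by compute_degree
    have e3 : (X : ℂ[X]).natDegree ≤ 1 := natDegree_X_le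
    have pw : ∀ (p : ℂ[X]) (i : ℕ), p.natDegree ≤ 1 → (p ^ i).natDegree ≤ i := fun p i hp => by
      simpa using natDegree_pow_le_of_le i hp
    have two : ∀ (p q : ℂ[X]) (i j : ℕ), p.natDegree ≤ 1 → q.natDegree ≤ 1 →
        (p ^ i * q ^ j).natDegree ≤ i + j := fun p q i j hp hq =>
      natDegree_mul_le_of_le (pw p i hp) (pw q j hq)
    have w : ∀ p q : ℂ[X], p.natDegree ≤ 1 → q.natDegree ≤ 1 →
        (C (1 / 2) * p * (q ^ a * p ^ b + p ^ a * q ^ b)).natDegree ≤ (0 + 1) + (a + b) :=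
      fun p q hp hq => natDegree_mul_le_of_le
        (natDegree_mul_le_of_le (natDegree_C _).le hp)
        (natDegree_add_le_of_degree_le (two _ _ _ _ hq hp) (two _ _ _ _ hp hq))
    refine natDegree_add_le_of_degree_le ?_ ?_
    · exact (natDegree_mul_le_of_le (two _ _ c d (e1 _) (e2 _)) (w _ _ (e2 _) e3)).trans
        (by omega)
    · exact (natDegree_mul_le_of_le (two _ _ c d e3 (e2 _)) (w _ _ (e1 _) (e2 _))).trans
        (by omega)
  · intro k
    simp only [w₁, w₂, bracketCoeff, eval_add, eval_mul, eval_pow, eval_sub, eval_X, eval_C]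
    rw [show m + n + k - m = n + k by ring, show m + n - (m + n + k) = -k by ring,
      show m - (m + n + k) = -(n + k) by ring, show n - (m + n + k) = -(m + k) by ring,
      show m + n + k - n = m + k by ring, show -k - m = -(m + k) by ring,
      show m + n - -k = m + n + k by ring, show m - -k = m + k by ring,
      show n - -k = n + k by ring, show -k - n = -(n + k) by ring,
      show m + (n + k) = m + n + k by ring, show n + (m + k) = m + n + k by ring]
    ring

/-- The commutator `[𝔏(a,b;m), 𝔏(c,d;n)]` lies in the span of
`{𝔏(p,q;m+n) : p+q ≤ a+b+c+d+1} ∪ {id_S}`; and if `m+n ≠ 0`, no identity component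
is needed. -/
theorem commutator_of_quadratic_operators
    (LL : ℕ → ℕ → ℤ → Module.End ℂ SS)
    (hLL : ∀ (a b : ℕ) (n : ℤ) (p : SS), LL a b n p
      = (1 / 2 : ℂ) •
          ∑ᶠ j : ℤ, ((j : ℂ) ^ a * ((n : ℂ) - (j : ℂ)) ^ b) • nord j (n - j) p)
    (a b c d : ℕ) (m n : ℤ) :
    LL a b m * LL c d n - LL c d n * LL a b m
      ∈ Submodule.span ℂ
          ({g | ∃ p q : ℕ, p + q ≤ a + b + c + d + 1 ∧ g = LL p q (m + n)}
            ∪ {(1 : Module.End ℂ SS)}) ∧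
    (m + n ≠ 0 →
      LL a b m * LL c d n - LL c d n * LL a b m
        ∈ Submodule.span ℂ
            {g | ∃ p q : ℕ, p + q ≤ a + b + c + d + 1 ∧ g = LL p q (m + n)}) := by
  replace hLL : IsQuadraticFamily LL := hLL
  obtain ⟨f, hdeg, hf⟩ := exists_symbol a b c d (m : ℂ) (n : ℂ)
  set N := a + b + c + d + 1 with hN
  set M : Module.End ℂ SS := ∑ i ∈ Finset.range (N + 1), f.coeff i • LL i 0 (m + n) with hM
  set K : Module.End ℂ SS := LL a b m * LL c d n - LL c d n * LL a b m with hK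
  have hMspan : M ∈ Submodule.span ℂ {g | ∃ p q : ℕ, p + q ≤ N ∧ g = LL p q (m + n)} :=
    Submodule.sum_mem _ fun i hi => Submodule.smul_mem _ _ <| Submodule.subset_span
      ⟨i, 0, by have := Finset.mem_range.mp hi; omega, rfl⟩
  have hMcomm : ∀ (k : ℤ) (p : SS), M (hOp k p) = hOp k (M p)
      + (-((k : ℂ) / 2) * (f.eval ((m : ℂ) + n + k) + f.eval (-(k : ℂ)))) • hOp (m + n + k) p := by
    intro k p
    simp only [hM, LinearMap.sum_apply, LinearMap.smul_apply, LL_comm_hOp hLL, smul_add,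
      Finset.sum_add_distrib, map_sum, map_smul, smul_smul, ← Finset.sum_smul]
    congr 2
    rw [Polynomial.eval_eq_sum_range' (Nat.lt_succ_of_le hdeg),
      Polynomial.eval_eq_sum_range' (Nat.lt_succ_of_le hdeg), ← Finset.sum_add_distrib,
      Finset.mul_sum]
    refine Finset.sum_congr rfl fun i _ => ?_
    simp only [bracketCoeff, pow_zero]
    push_cast
    ring
  have hKcomm : ∀ (k : ℤ) (p : SS), K (hOp k p) = hOp k (K p)
      + (bracketCoeff c d n k * bracketCoeff a b m (n + k)
          - bracketCoeff a b m k * bracketCoeff c d n (m + k)) • hOp (m + n + k) p := by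
    intro k p
    simp only [hK, LinearMap.sub_apply, Module.End.mul_apply, LL_comm_hOp hLL, map_add, map_sub,
      map_smul]
    rw [show m + (n + k) = m + n + k by ring, show n + (m + k) = m + n + k by ring]
    push_cast
    module
  have hD := eq_smul_one_of_commute (K - M) (by
    intro k p
    rw [LinearMap.sub_apply K M, LinearMap.sub_apply K M, hKcomm, hMcomm, hf, map_sub]
    abel)
  have hK' : K = M + MvPolynomial.constantCoeff ((K - M) 1) • (1 : Module.End ℂ SS) := by
    rw [← hD]
    abel
  refine ⟨?_, fun hmn => ?_⟩
  · rw [hK']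
    exact Submodule.add_mem _ (Submodule.span_mono Set.subset_union_left hMspan)
      (Submodule.smul_mem _ _ (Submodule.subset_span (Or.inr rfl)))
  · have hM1 : MvPolynomial.constantCoeff (M 1) = 0 := by
      rw [hM, LinearMap.sum_apply, map_sum]
      refine Finset.sum_eq_zero fun i _ => ?_
      rw [LinearMap.smul_apply, MvPolynomial.constantCoeff_smul, constantCoeff_LL_one hLL,
        smul_zero]
    have hE : LL 0 0 0 (K 1) = -((m : ℂ) + n) • K 1 := by
      simp only [hK, LinearMap.sub_apply, Module.End.mul_apply, euler_comm hLL, map_sub, map_smul,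
        euler_one hLL, map_zero]
      module
    have hK1 : MvPolynomial.constantCoeff (K 1) = 0 := by
      have h := congrArg MvPolynomial.constantCoeff hE
      rw [constantCoeff_euler hLL, MvPolynomial.constantCoeff_smul, smul_eq_mul] at h
      exact (mul_eq_zero.mp h.symm).resolve_left (neg_ne_zero.mpr (by exact_mod_cast hmn))
    rw [hK', LinearMap.sub_apply, map_sub, hK1, hM1, sub_zero, zero_smul, add_zero]
    exact hMspan
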